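/- There exist constants ε > 0 and c > 0, depending only on L, η, β, κ, τ, m, δ and p, such that for every smooth solution (u, θ, q) of the thermoviscoelastic system with second sound satisfying boundary conditions (D), the Lyapunov functional L₁(t) = E₁(t) + E₂(t) + ε F₁(t) satisfies L₁(t) ≥ 0 and L₁′(t) ≤ −c E₁(t) for all t > 0. -/

import Mathlib

open MeasureTheory Set intervalIntegral

noncomputable section

/-- Time derivative of a function of `(x, t)` (curried as `x ↦ t ↦ f x t`). -/
def pdt (f : ℝ → ℝ → ℝ) : ℝ → ℝ → ℝ := fun x t => deriv (f x) t

/-- Space derivative of a function of `(x, t)`. -/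
def pdx (f : ℝ → ℝ → ℝ) : ℝ → ℝ → ℝ := fun x t => deriv (fun y => f y t) x

/-- A smooth solution of the thermoviscoelastic system with second sound:
`u, θ, q` are `C^∞` and the three PDEs hold on `(0, L) × (0, ∞)`. -/
def IsSmoothSol (L η β κ τ : ℝ) (m δ p : ℝ → ℝ) (u θ q : ℝ → ℝ → ℝ) : Prop :=
  ContDiff ℝ (⊤ : ℕ∞) (Function.uncurry u) ∧ ContDiff ℝ (⊤ : ℕ∞) (Function.uncurry θ) ∧
    ContDiff ℝ (⊤ : ℕ∞) (Function.uncurry q) ∧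
    ∀ x ∈ Ioo (0 : ℝ) L, ∀ t : ℝ, 0 < t →
      (m x * pdt (pdt u) x t
          - pdx (fun y s => p y * pdx u y s + 2 * δ y * pdt (pdx u) y s) x t
          + η * pdx θ x t = 0) ∧
      (pdt θ x t + κ * pdx q x t + η * pdt (pdx u) x t = 0) ∧
      (τ * pdt q x t + β * q x t + κ * pdx θ x t = 0)

/-- Boundary conditions (D): clamped structure, temperature zero at both ends. -/
def BCD (L : ℝ) (u θ : ℝ → ℝ → ℝ) : Prop :=
  ∀ t : ℝ, 0 ≤ t → u 0 t = 0 ∧ u L t = 0 ∧ θ 0 t = 0 ∧ θ L t = 0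

/-- The first-order energy `E₁`. -/
def energy1 (L τ : ℝ) (m p : ℝ → ℝ) (u θ q : ℝ → ℝ → ℝ) (t : ℝ) : ℝ :=
  (1 / 2) * ((∫ x in (0 : ℝ)..L, p x * (pdx u x t) ^ 2)
    + (∫ x in (0 : ℝ)..L, m x * (pdt u x t) ^ 2)
    + (∫ x in (0 : ℝ)..L, (θ x t) ^ 2)
    + τ * ∫ x in (0 : ℝ)..L, (q x t) ^ 2)

/-- The second-order energy `E₂`. -/
def energy2 (L τ : ℝ) (m p : ℝ → ℝ) (u θ q : ℝ → ℝ → ℝ) (t : ℝ) : ℝ :=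
  (1 / 2) * ((∫ x in (0 : ℝ)..L, p x * (pdt (pdx u) x t) ^ 2)
    + (∫ x in (0 : ℝ)..L, m x * (pdt (pdt u) x t) ^ 2)
    + (∫ x in (0 : ℝ)..L, (pdt θ x t) ^ 2)
    + τ * ∫ x in (0 : ℝ)..L, (pdt q x t) ^ 2)

/-- The auxiliary functional `F₁`. -/
def F1 (L : ℝ) (m δ : ℝ → ℝ) (u : ℝ → ℝ → ℝ) (t : ℝ) : ℝ :=
  (∫ x in (0 : ℝ)..L, m x * pdt u x t * u x t)
    + ∫ x in (0 : ℝ)..L, δ x * (pdx u x t) ^ 2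

/-! The energy identity `E₁' = -2 ∫ δ u_xt² - β ∫ q²` also holds for the time-differentiated
solution, so `R = -(E₁ + E₂)'` controls `∫ u_xt²`, `∫ q²` and `∫ q_t²`. By the Poincaré inequality
the first of these controls `∫ m u_t²`, and since `κ θ_x = -(τ q_t + β q)` the other two control
`∫ θ²`. The one part of `E₁` left, `∫ p u_x²`, is supplied by `F₁'`. Hence `F₁' + E₁ ≤ K R`. After
enlarging `K` so that also `-F₁ ≤ K E₁`, take `ε = c = 1 / K`.

The coefficients need not be differentiable, so the momentum equation, whose `deriv` could be a junk
value, is used in its integrated form: the stress is absolutely continuous, and the integrated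
equation can be differentiated in time. -/

section PartialDerivatives

variable {f : ℝ → ℝ → ℝ} {x t : ℝ} {n : WithTop ℕ∞}

lemma hasDerivAt_fderiv_snd (hf : DifferentiableAt ℝ (Function.uncurry f) (x, t)) :
    HasDerivAt (f x) (fderiv ℝ (Function.uncurry f) (x, t) (0, 1)) t :=
  hf.hasFDerivAt.comp_hasDerivAt t ((hasDerivAt_const t x).prodMk (hasDerivAt_id t))

lemma hasDerivAt_fderiv_fst (hf : DifferentiableAt ℝ (Function.uncurry f) (x, t)) :
    HasDerivAt (fun y => f y t) (fderiv ℝ (Function.uncurry f) (x, t) (1, 0)) x := by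
  have hline : HasDerivAt (fun y : ℝ => (y, t)) (1, 0) x :=
    (hasDerivAt_id x).prodMk (hasDerivAt_const x t)
  exact hf.hasFDerivAt.comp_hasDerivAt x hline

lemma uncurry_pdt_eq_fderiv (hf : Differentiable ℝ (Function.uncurry f)) :
    Function.uncurry (pdt f) = fun z => fderiv ℝ (Function.uncurry f) z (0, 1) :=
  funext fun z => (hasDerivAt_fderiv_snd (hf z)).deriv

lemma uncurry_pdx_eq_fderiv (hf : Differentiable ℝ (Function.uncurry f)) :
    Function.uncurry (pdx f) = fun z => fderiv ℝ (Function.uncurry f) z (1, 0) :=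
  funext fun z => (hasDerivAt_fderiv_fst (hf z)).deriv

lemma contDiff_uncurry_pdt (hf : ContDiff ℝ (n + 1) (Function.uncurry f)) :
    ContDiff ℝ n (Function.uncurry (pdt f)) := by
  rw [uncurry_pdt_eq_fderiv (hf.differentiable (by simp))]
  exact (hf.fderiv_right le_rfl).clm_apply contDiff_const

lemma contDiff_uncurry_pdx (hf : ContDiff ℝ (n + 1) (Function.uncurry f)) :
    ContDiff ℝ n (Function.uncurry (pdx f)) := by
  rw [uncurry_pdx_eq_fderiv (hf.differentiable (by simp))]
  exact (hf.fderiv_right le_rfl).clm_apply contDiff_const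

lemma pdx_pdt_comm (hf : ContDiff ℝ 2 (Function.uncurry f)) : pdx (pdt f) = pdt (pdx f) := by
  have hdiff : Differentiable ℝ (Function.uncurry f) := hf.differentiable (by simp)
  have hdiff₂ : Differentiable ℝ (fderiv ℝ (Function.uncurry f)) :=
    (hf.fderiv_right (m := 1) le_rfl).differentiable (by simp)
  have h₁ : ContDiff ℝ 1 (Function.uncurry (pdt f)) := contDiff_uncurry_pdt hf
  have h₂ : ContDiff ℝ 1 (Function.uncurry (pdx f)) := contDiff_uncurry_pdx hf
  ext x t
  have hsymm : IsSymmSndFDerivAt ℝ (Function.uncurry f) (x, t) :=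
    hf.contDiffAt.isSymmSndFDerivAt (by simp)
  have hxt : pdx (pdt f) x t = fderiv ℝ (Function.uncurry (pdt f)) (x, t) (1, 0) :=
    (hasDerivAt_fderiv_fst (h₁.differentiable (by simp) _)).deriv
  have htx : pdt (pdx f) x t = fderiv ℝ (Function.uncurry (pdx f)) (x, t) (0, 1) :=
    (hasDerivAt_fderiv_snd (h₂.differentiable (by simp) _)).deriv
  rw [hxt, htx, uncurry_pdt_eq_fderiv hdiff, uncurry_pdx_eq_fderiv hdiff,
    fderiv_clm_apply (hdiff₂ _) (differentiableAt_const _),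
    fderiv_clm_apply (hdiff₂ _) (differentiableAt_const _)]
  simpa using hsymm (1, 0) (0, 1)

end PartialDerivatives

/-- `f` is `C^∞` as a function of the pair `(x, t)`; this class is closed under `pdt` and `pdx`. -/
def JointlySmooth (f : ℝ → ℝ → ℝ) : Prop := ContDiff ℝ (⊤ : ℕ∞) (Function.uncurry f)

namespace JointlySmooth

variable {f g : ℝ → ℝ → ℝ}

lemma differentiable (hf : JointlySmooth f) : Differentiable ℝ (Function.uncurry f) :=
  ContDiff.differentiable hf (by simp)

lemma continuous_uncurry (hf : JointlySmooth f) : Continuous (Function.uncurry f) :=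
  hf.differentiable.continuous

lemma continuous_space (hf : JointlySmooth f) (t : ℝ) : Continuous fun x => f x t :=
  hf.continuous_uncurry.comp (Continuous.prodMk_left t)

lemma contDiff_space (hf : JointlySmooth f) (t : ℝ) : ContDiff ℝ 1 fun x => f x t :=
  (ContDiff.of_le hf (mod_cast le_top)).comp (contDiff_prodMk_left t)

lemma hasDerivAt_pdt (hf : JointlySmooth f) (x t : ℝ) : HasDerivAt (f x) (pdt f x t) t :=
  (hasDerivAt_fderiv_snd (hf.differentiable _)).differentiableAt.hasDerivAt

lemma hasDerivAt_pdx (hf : JointlySmooth f) (x t : ℝ) :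
    HasDerivAt (fun y => f y t) (pdx f x t) x :=
  (hasDerivAt_fderiv_fst (hf.differentiable _)).differentiableAt.hasDerivAt

lemma pdx_pdt (hf : JointlySmooth f) : pdx (pdt f) = pdt (pdx f) :=
  pdx_pdt_comm (ContDiff.of_le hf (WithTop.coe_le_coe.2 (le_top : (2 : ℕ∞) ≤ ⊤)))

lemma mul (hf : JointlySmooth f) (hg : JointlySmooth g) :
    JointlySmooth fun x t => f x t * g x t :=
  ContDiff.mul hf hg

lemma pdt_mul (hf : JointlySmooth f) (hg : JointlySmooth g) :
    pdt (fun x t => f x t * g x t) = fun x t => pdt f x t * g x t + f x t * pdt g x t :=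
  funext₂ fun x t => ((hf.hasDerivAt_pdt x t).mul (hg.hasDerivAt_pdt x t)).deriv

lemma hasDerivAt_integral_mul (hf : JointlySmooth f) {a b : ℝ} {w : ℝ → ℝ}
    (hw : IntervalIntegrable w volume a b) (t : ℝ) :
    HasDerivAt (fun s => ∫ x in a..b, w x * f x s) (∫ x in a..b, w x * pdt f x t) t := by
  have hderiv : ContDiff ℝ (⊤ : ℕ∞) (Function.uncurry (pdt f)) := contDiff_uncurry_pdt hf
  have hint : ∀ s, IntervalIntegrable (fun x => w x * f x s) volume a b := fun s =>
    hw.mul_continuousOn (hf.continuous_space s).continuousOn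
  have hint' : IntervalIntegrable (fun x => w x * pdt f x t) volume a b :=
    hw.mul_continuousOn (JointlySmooth.continuous_space hderiv t).continuousOn
  obtain ⟨C, hC⟩ := (isCompact_uIcc.prod isCompact_Icc).exists_bound_of_continuousOn
    (s := uIcc a b ×ˢ Icc (t - 1) (t + 1)) hderiv.continuous.continuousOn
  refine (hasDerivAt_integral_of_dominated_loc_of_deriv_le
    (F := fun s x => w x * f x s) (F' := fun s x => w x * pdt f x s)
    (bound := fun x => ‖w x‖ * C) (Icc_mem_nhds (sub_one_lt t) (lt_add_one t))
    (.of_forall fun s => (hint s).def'.aestronglyMeasurable) (hint t)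
    hint'.def'.aestronglyMeasurable ?_ (hw.norm.mul_const C) ?_).2
  · refine .of_forall fun x hx s hs => ?_
    rw [norm_mul]
    exact mul_le_mul_of_nonneg_left (hC (x, s) ⟨uIoc_subset_uIcc hx, hs⟩) (norm_nonneg _)
  · exact .of_forall fun x _ s _ => (hf.hasDerivAt_pdt x s).const_mul (w x)

lemma hasDerivAt_integral_mul_sq (hf : JointlySmooth f) {a b : ℝ} {w : ℝ → ℝ}
    (hw : IntervalIntegrable w volume a b) (t : ℝ) :
    HasDerivAt (fun s => ∫ x in a..b, w x * f x s ^ 2)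
      (2 * ∫ x in a..b, w x * (f x t * pdt f x t)) t := by
  have h := (hf.mul hf).hasDerivAt_integral_mul hw t
  simp only [hf.pdt_mul hf] at h
  simp only [pow_two]
  rw [← intervalIntegral.integral_const_mul]
  exact h.congr_deriv (integral_congr fun x _ => by ring)

lemma hasDerivAt_integral_sq (hf : JointlySmooth f) (a b t : ℝ) :
    HasDerivAt (fun s => ∫ x in a..b, f x s ^ 2) (2 * ∫ x in a..b, f x t * pdt f x t) t := by
  simpa only [one_mul] using hf.hasDerivAt_integral_mul_sq (w := fun _ => 1)
    (a := a) (b := b) intervalIntegrable_const t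

lemma pdt (hf : JointlySmooth f) : JointlySmooth (pdt f) := contDiff_uncurry_pdt hf

lemma pdx (hf : JointlySmooth f) : JointlySmooth (pdx f) := contDiff_uncurry_pdx hf

end JointlySmooth

section IntegralsOnAnInterval

variable {a b : ℝ}

lemma integral_mono_of_continuousOn (hab : a ≤ b) {f g : ℝ → ℝ} (hf : ContinuousOn f (Icc a b))
    (hg : ContinuousOn g (Icc a b)) (h : ∀ x ∈ Ioo a b, f x ≤ g x) :
    ∫ x in a..b, f x ≤ ∫ x in a..b, g x :=
  integral_mono_on_of_le_Ioo hab (hf.intervalIntegrable_of_Icc hab)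
    (hg.intervalIntegrable_of_Icc hab) h

lemma integral_mul_sq_nonneg (hab : a ≤ b) {w : ℝ → ℝ} (hw : ∀ x ∈ Icc a b, 0 ≤ w x)
    (f : ℝ → ℝ) : 0 ≤ ∫ x in a..b, w x * f x ^ 2 :=
  integral_nonneg hab fun x hx => mul_nonneg (hw x hx) (sq_nonneg _)

lemma integral_eq_zero_of_hasDerivAt (hab : a ≤ b) {f f' : ℝ → ℝ}
    (hf : ContinuousOn f (Icc a b)) (hderiv : ∀ x ∈ Ioo a b, HasDerivAt f (f' x) x)
    (hf' : ContinuousOn f' (Icc a b)) (ha : f a = 0) (hb : f b = 0) :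
    ∫ x in a..b, f' x = 0 := by
  rw [integral_eq_sub_of_hasDerivAt_of_le hab hf hderiv (hf'.intervalIntegrable_of_Icc hab),
    ha, hb, sub_zero]

lemma hasDerivAt_of_sub_eq_integral {f f' : ℝ → ℝ} (hf' : ContinuousOn f' (Icc a b))
    (hf : ∀ x ∈ Icc a b, f x - f a = ∫ y in a..x, f' y) {x : ℝ} (hx : x ∈ Ioo a b) :
    HasDerivAt f (f' x) x := by
  have hmem : Icc a b ∈ nhds x := Icc_mem_nhds hx.1 hx.2
  have hprim : HasDerivAt (fun z => ∫ y in a..z, f' y) (f' x) x :=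
    integral_hasDerivAt_right
      ((hf'.mono (Icc_subset_Icc_right hx.2.le)).intervalIntegrable_of_Icc hx.1.le)
      ⟨Icc a b, hmem, hf'.aestronglyMeasurable measurableSet_Icc⟩ (hf'.continuousAt hmem)
  refine (hprim.const_add (f a)).congr_of_eventuallyEq ?_
  filter_upwards [hmem] with z hz
  rw [← hf z hz, add_sub_cancel]

lemma exists_pos_forall_le {w : ℝ → ℝ} (hw : ContinuousOn w (Icc a b)) :
    ∃ M > 0, ∀ x ∈ Icc a b, w x ≤ M := by
  obtain ⟨C, hC⟩ := isCompact_Icc.exists_bound_of_continuousOn hw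
  exact ⟨max C 1, by positivity, fun x hx =>
    (le_abs_self _).trans ((hC x hx).trans (le_max_left _ _))⟩

lemma exists_pos_forall_one_le_mul {v : ℝ → ℝ} (hv : ContinuousOn v (Icc a b))
    (hpos : ∀ x ∈ Icc a b, 0 < v x) : ∃ N > 0, ∀ x ∈ Icc a b, 1 ≤ N * v x := by
  obtain ⟨N, hN, hle⟩ := exists_pos_forall_le (hv.inv₀ fun x hx => (hpos x hx).ne')
  exact ⟨N, hN, fun x hx => (inv_le_iff_one_le_mul₀ (hpos x hx)).1 (hle x hx)⟩

lemma poincare_inequality (hab : a ≤ b) {f f' : ℝ → ℝ} (hf : ContinuousOn f (Icc a b))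
    (hderiv : ∀ x ∈ Ioo a b, HasDerivAt f (f' x) x) (hf' : ContinuousOn f' (Icc a b))
    (ha : f a = 0) :
    ∫ x in a..b, f x ^ 2 ≤ 4 * (b - a) ^ 2 * ∫ x in a..b, f' x ^ 2 := by
  -- `(x - b) f²` vanishes at both ends
  have hzero : ∫ x in a..b, (f x ^ 2 + 2 * (x - b) * (f x * f' x)) = 0 := by
    refine integral_eq_zero_of_hasDerivAt hab (f := fun x => (x - b) * f x ^ 2) (by fun_prop)
      (fun x hx => ?_) (by fun_prop) (by simp [ha]) (by simp)
    refine (((hasDerivAt_id' x).sub_const b).mul ((hderiv x hx).pow 2)).congr_deriv ?_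
    norm_num
    ring
  have hle : ∫ x in a..b, (1 / 2 * f x ^ 2 - 2 * (b - a) ^ 2 * f' x ^ 2) ≤
      ∫ x in a..b, (f x ^ 2 + 2 * (x - b) * (f x * f' x)) := by
    refine integral_mono_of_continuousOn hab (by fun_prop) (by fun_prop) fun x hx => ?_
    have hdist : (x - b) ^ 2 * f' x ^ 2 ≤ (b - a) ^ 2 * f' x ^ 2 :=
      mul_le_mul_of_nonneg_right (by nlinarith [hx.1, hx.2]) (sq_nonneg _)
    linarith [sq_nonneg (f x + 2 * (x - b) * f' x)]
  rw [hzero, intervalIntegral.integral_sub, intervalIntegral.integral_const_mul,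
    intervalIntegral.integral_const_mul] at hle
  · linarith
  all_goals exact ContinuousOn.intervalIntegrable_of_Icc hab (by fun_prop)

lemma exists_weighted_poincare_inequality (hab : a ≤ b) {w v : ℝ → ℝ}
    (hw : ContinuousOn w (Icc a b)) (hv : ContinuousOn v (Icc a b))
    (hpos : ∀ x ∈ Icc a b, 0 < v x) :
    ∃ C ≥ 0, ∀ f f' : ℝ → ℝ, ContinuousOn f (Icc a b) →
      (∀ x ∈ Ioo a b, HasDerivAt f (f' x) x) → ContinuousOn f' (Icc a b) → f a = 0 →
      ∫ x in a..b, w x * f x ^ 2 ≤ C * ∫ x in a..b, v x * f' x ^ 2 := by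
  obtain ⟨M, hM, hwM⟩ := exists_pos_forall_le hw
  obtain ⟨N, hN, hvN⟩ := exists_pos_forall_one_le_mul hv hpos
  refine ⟨M * (4 * (b - a) ^ 2 * N), by positivity, fun f f' hf hderiv hf' ha => ?_⟩
  have hupper : ∫ x in a..b, w x * f x ^ 2 ≤ M * ∫ x in a..b, f x ^ 2 := by
    rw [← intervalIntegral.integral_const_mul]
    refine integral_mono_of_continuousOn hab (by fun_prop) (by fun_prop) fun x hx => ?_
    exact mul_le_mul_of_nonneg_right (hwM x (Ioo_subset_Icc_self hx)) (sq_nonneg _)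
  have hlower : ∫ x in a..b, f' x ^ 2 ≤ N * ∫ x in a..b, v x * f' x ^ 2 := by
    rw [← intervalIntegral.integral_const_mul]
    refine integral_mono_of_continuousOn hab (by fun_prop) (by fun_prop) fun x hx => ?_
    rw [← mul_assoc]
    exact le_mul_of_one_le_left (sq_nonneg _) (hvN x (Ioo_subset_Icc_self hx))
  calc ∫ x in a..b, w x * f x ^ 2
    _ ≤ M * ∫ x in a..b, f x ^ 2 := hupper
    _ ≤ M * (4 * (b - a) ^ 2 * ∫ x in a..b, f' x ^ 2) := by
        gcongr
        exact poincare_inequality hab hf hderiv hf' ha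
    _ ≤ M * (4 * (b - a) ^ 2 * (N * ∫ x in a..b, v x * f' x ^ 2)) := by gcongr
    _ = M * (4 * (b - a) ^ 2 * N) * ∫ x in a..b, v x * f' x ^ 2 := by ring

lemma exists_mul_integral_mul_le (hab : a ≤ b) (c : ℝ) {v : ℝ → ℝ} (hv : ContinuousOn v (Icc a b))
    (hpos : ∀ x ∈ Icc a b, 0 < v x) :
    ∃ K ≥ 0, ∀ f g : ℝ → ℝ, ContinuousOn f (Icc a b) → ContinuousOn g (Icc a b) →
      c * ∫ x in a..b, f x * g x ≤
        1 / 2 * (∫ x in a..b, v x * g x ^ 2) + K * ∫ x in a..b, f x ^ 2 := by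
  obtain ⟨N, hN, hvN⟩ := exists_pos_forall_one_le_mul hv hpos
  refine ⟨N * c ^ 2 / 2, by positivity, fun f g hf hg => ?_⟩
  rw [← intervalIntegral.integral_const_mul, ← intervalIntegral.integral_const_mul,
    ← intervalIntegral.integral_const_mul, ← intervalIntegral.integral_add]
  · refine integral_mono_of_continuousOn hab (by fun_prop) (by fun_prop) fun x hx => ?_
    have hg_le : g x ^ 2 ≤ N * v x * g x ^ 2 :=
      le_mul_of_one_le_left (sq_nonneg _) (hvN x (Ioo_subset_Icc_self hx))
    refine le_of_mul_le_mul_left ?_ hN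
    linarith [sq_nonneg (g x - N * c * f x)]
  all_goals exact ContinuousOn.intervalIntegrable_of_Icc hab (by fun_prop)

end IntegralsOnAnInterval

lemma eq_zero_of_hasDerivAt_of_forall_pos {g : ℝ → ℝ} {g' t : ℝ} (hg : HasDerivAt g g' t)
    (hzero : ∀ s, 0 < s → g s = 0) (ht : 0 < t) : g' = 0 :=
  hg.unique <| (hasDerivAt_const t (0 : ℝ)).congr_of_eventuallyEq <| by
    filter_upwards [Ioi_mem_nhds ht] with s hs using hzero s hs

/-- The total stress `p u_x + 2 δ u_xt - η θ`, in terms of which the momentum equation reads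
`m u_tt = stress_x`. -/
def stress (η : ℝ) (δ p : ℝ → ℝ) (u θ : ℝ → ℝ → ℝ) (x t : ℝ) : ℝ :=
  p x * pdx u x t + 2 * δ x * pdt (pdx u) x t - η * θ x t

/-- The dissipation rate `2 ∫ δ u_xt² + β ∫ q²`, equal to `-E₁'`. -/
def dissipation (L β : ℝ) (δ : ℝ → ℝ) (u q : ℝ → ℝ → ℝ) (t : ℝ) : ℝ :=
  2 * (∫ x in (0 : ℝ)..L, δ x * pdt (pdx u) x t ^ 2) + β * ∫ x in (0 : ℝ)..L, q x t ^ 2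

/-- Smooth functions satisfying the system with boundary conditions (D), where the momentum
equation is integrated in space over `[0, x]`. Unlike the pointwise equation, in which `pdx` is
applied to a possibly non-differentiable function, this form is stable under `pdt`. -/
structure IsIntegratedSol (L η β κ τ : ℝ) (m δ p : ℝ → ℝ) (u θ q : ℝ → ℝ → ℝ) : Prop where
  smooth_u : JointlySmooth u
  smooth_θ : JointlySmooth θ
  smooth_q : JointlySmooth q
  momentum : ∀ t, 0 < t → ∀ x ∈ Icc 0 L,
    stress η δ p u θ x t - stress η δ p u θ 0 t = ∫ y in (0 : ℝ)..x, m y * pdt (pdt u) y t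
  heat : ∀ t, 0 < t → ∀ x ∈ Ioo 0 L, pdt θ x t + κ * pdx q x t + η * pdt (pdx u) x t = 0
  cattaneo : ∀ t, 0 < t → ∀ x ∈ Ioo 0 L, τ * pdt q x t + β * q x t + κ * pdx θ x t = 0
  u_left : ∀ t, 0 < t → u 0 t = 0
  u_right : ∀ t, 0 < t → u L t = 0
  θ_left : ∀ t, 0 < t → θ 0 t = 0
  θ_right : ∀ t, 0 < t → θ L t = 0

section System

variable {L η β κ τ : ℝ} {m δ p : ℝ → ℝ} {u θ q : ℝ → ℝ → ℝ} {t : ℝ}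

lemma absolutelyContinuousOnInterval_flux {a b : ℝ} (hδ : AbsolutelyContinuousOnInterval δ a b)
    (hp : AbsolutelyContinuousOnInterval p a b) (hu : JointlySmooth u) (t : ℝ) :
    AbsolutelyContinuousOnInterval
      (fun y => p y * pdx u y t + 2 * δ y * pdt (pdx u) y t) a b :=
  (hp.mul (hu.pdx.contDiff_space t).contDiffOn.absolutelyContinuousOnInterval).add
    ((hδ.const_mul 2).mul
      (hu.pdx.pdt.contDiff_space t).contDiffOn.absolutelyContinuousOnInterval)

lemma IsSmoothSol.isIntegratedSol (hm : ContinuousOn m (Icc 0 L))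
    (hδ : AbsolutelyContinuousOnInterval δ 0 L) (hp : AbsolutelyContinuousOnInterval p 0 L)
    (hsol : IsSmoothSol L η β κ τ m δ p u θ q) (hbc : BCD L u θ) :
    IsIntegratedSol L η β κ τ m δ p u θ q where
  smooth_u := hsol.1
  smooth_θ := hsol.2.1
  smooth_q := hsol.2.2.1
  heat t ht x hx := (hsol.2.2.2 x hx t ht).2.1
  cattaneo t ht x hx := (hsol.2.2.2 x hx t ht).2.2
  u_left t ht := (hbc t ht.le).1
  u_right t ht := (hbc t ht.le).2.1
  θ_left t ht := (hbc t ht.le).2.2.1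
  θ_right t ht := (hbc t ht.le).2.2.2
  momentum t ht x hx := by
    obtain ⟨hu, hθ, -, hpde⟩ := hsol
    replace hu : JointlySmooth u := hu
    replace hθ : JointlySmooth θ := hθ
    have hsub : uIcc 0 x ⊆ uIcc 0 L :=
      uIcc_subset_uIcc_left (uIcc_of_le (hx.1.trans hx.2) ▸ hx)
    have hmu : IntervalIntegrable (fun y => m y * pdt (pdt u) y t) volume 0 x :=
      ((hm.mono (Icc_subset_Icc_right hx.2)).mul
        (hu.pdt.pdt.continuous_space t).continuousOn).intervalIntegrable_of_Icc hx.1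
    have hθx : IntervalIntegrable (fun y => pdx θ y t) volume 0 x :=
      (hθ.pdx.continuous_space t).intervalIntegrable 0 x
    have hpde_integral : ∫ y in (0 : ℝ)..x, pdx (fun y s => p y * pdx u y s
        + 2 * δ y * pdt (pdx u) y s) y t =
        (∫ y in (0 : ℝ)..x, m y * pdt (pdt u) y t) + η * (θ x t - θ 0 t) := by
      rw [← integral_eq_sub_of_hasDerivAt (fun y _ => hθ.hasDerivAt_pdx y t) hθx,
        ← intervalIntegral.integral_const_mul, ← integral_add hmu (hθx.const_mul η)]
      refine integral_congr_Ioo_of_le hx.1 fun y hy => ?_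
      linarith [(hpde y ⟨hy.1, hy.2.trans_le hx.2⟩ t ht).1]
    have hflux := (absolutelyContinuousOnInterval_flux (hδ.mono hsub) (hp.mono hsub) hu
      t).integral_deriv_eq_sub.symm.trans hpde_integral
    unfold stress
    linarith

lemma hasDerivAt_stress_pdt (hu : JointlySmooth u) (hθ : JointlySmooth θ) (x t : ℝ) :
    HasDerivAt (stress η δ p u θ x) (stress η δ p (pdt u) (pdt θ) x t) t := by
  unfold stress
  rw [hu.pdx_pdt]
  exact (((hu.pdx.hasDerivAt_pdt x t).const_mul _).add
    ((hu.pdx.pdt.hasDerivAt_pdt x t).const_mul _)).sub ((hθ.hasDerivAt_pdt x t).const_mul η)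

lemma continuousOn_stress {s : Set ℝ} (hδ : ContinuousOn δ s) (hp : ContinuousOn p s)
    (hu : JointlySmooth u) (hθ : JointlySmooth θ) (t : ℝ) :
    ContinuousOn (fun x => stress η δ p u θ x t) s := by
  have hux := hu.pdx.continuous_space t
  have huxt := hu.pdx.pdt.continuous_space t
  have hθ := hθ.continuous_space t
  unfold stress
  fun_prop

namespace IsIntegratedSol

protected lemma pdt (h : IsIntegratedSol L η β κ τ m δ p u θ q)
    (hm : ContinuousOn m (Icc 0 L)) :
    IsIntegratedSol L η β κ τ m δ p (pdt u) (pdt θ) (pdt q) where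
  smooth_u := h.smooth_u.pdt
  smooth_θ := h.smooth_θ.pdt
  smooth_q := h.smooth_q.pdt
  momentum t ht x hx := by
    have hint : IntervalIntegrable m volume 0 x :=
      (hm.mono (Icc_subset_Icc_right hx.2)).intervalIntegrable_of_Icc hx.1
    have hstress (y : ℝ) : HasDerivAt (stress η δ p u θ y) (stress η δ p (pdt u) (pdt θ) y t) t :=
      hasDerivAt_stress_pdt h.smooth_u h.smooth_θ y t
    have hderiv := ((hstress x).sub (hstress 0)).sub
      (h.smooth_u.pdt.pdt.hasDerivAt_integral_mul hint t)
    exact sub_eq_zero.1 (eq_zero_of_hasDerivAt_of_forall_pos hderiv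
      (fun s hs => sub_eq_zero.2 (h.momentum s hs x hx)) ht)
  heat t ht x hx := by
    rw [h.smooth_u.pdx_pdt, h.smooth_q.pdx_pdt]
    exact eq_zero_of_hasDerivAt_of_forall_pos
      (((h.smooth_θ.pdt.hasDerivAt_pdt x t).add
        ((h.smooth_q.pdx.hasDerivAt_pdt x t).const_mul κ)).add
          ((h.smooth_u.pdx.pdt.hasDerivAt_pdt x t).const_mul η))
      (fun s hs => h.heat s hs x hx) ht
  cattaneo t ht x hx := by
    rw [h.smooth_θ.pdx_pdt]
    exact eq_zero_of_hasDerivAt_of_forall_pos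
      ((((h.smooth_q.pdt.hasDerivAt_pdt x t).const_mul τ).add
        ((h.smooth_q.hasDerivAt_pdt x t).const_mul β)).add
          ((h.smooth_θ.pdx.hasDerivAt_pdt x t).const_mul κ))
      (fun s hs => h.cattaneo s hs x hx) ht
  u_left t ht := eq_zero_of_hasDerivAt_of_forall_pos (h.smooth_u.hasDerivAt_pdt 0 t) h.u_left ht
  u_right t ht := eq_zero_of_hasDerivAt_of_forall_pos (h.smooth_u.hasDerivAt_pdt L t) h.u_right ht
  θ_left t ht := eq_zero_of_hasDerivAt_of_forall_pos (h.smooth_θ.hasDerivAt_pdt 0 t) h.θ_left ht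
  θ_right t ht := eq_zero_of_hasDerivAt_of_forall_pos (h.smooth_θ.hasDerivAt_pdt L t) h.θ_right ht

lemma hasDerivAt_stress (h : IsIntegratedSol L η β κ τ m δ p u θ q) (hm : ContinuousOn m (Icc 0 L))
    (ht : 0 < t) {x : ℝ} (hx : x ∈ Ioo 0 L) :
    HasDerivAt (fun y => stress η δ p u θ y t) (m x * pdt (pdt u) x t) x :=
  hasDerivAt_of_sub_eq_integral
    (hm.mul (h.smooth_u.pdt.pdt.continuous_space t).continuousOn) (h.momentum t ht) hx

end IsIntegratedSol

lemma hasDerivAt_energy1 (hm : IntervalIntegrable m volume 0 L)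
    (hp : IntervalIntegrable p volume 0 L) (hu : JointlySmooth u) (hθ : JointlySmooth θ)
    (hq : JointlySmooth q) (t : ℝ) :
    HasDerivAt (energy1 L τ m p u θ q)
      ((∫ x in (0 : ℝ)..L, p x * (pdx u x t * pdt (pdx u) x t))
        + (∫ x in (0 : ℝ)..L, m x * (pdt u x t * pdt (pdt u) x t))
        + (∫ x in (0 : ℝ)..L, θ x t * pdt θ x t)
        + τ * ∫ x in (0 : ℝ)..L, q x t * pdt q x t) t := by
  have h := ((((hu.pdx.hasDerivAt_integral_mul_sq hp t).add
    (hu.pdt.hasDerivAt_integral_mul_sq hm t)).add (hθ.hasDerivAt_integral_sq 0 L t)).add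
      ((hq.hasDerivAt_integral_sq 0 L t).const_mul τ)).const_mul (1 / 2)
  exact h.congr_deriv (by ring)

lemma energy2_eq_energy1_pdt (hu : JointlySmooth u) :
    energy2 L τ m p u θ q = energy1 L τ m p (pdt u) (pdt θ) (pdt q) := by
  unfold energy2 energy1
  rw [hu.pdx_pdt]

lemma mul_integral_pdx_sq_add_le_energy1 (hL : 0 ≤ L) (hτ : 0 ≤ τ) (t : ℝ) :
    1 / 2 * ((∫ x in (0 : ℝ)..L, p x * pdx u x t ^ 2) + ∫ x in (0 : ℝ)..L, m x * pdt u x t ^ 2) ≤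
      energy1 L τ m p u θ q t := by
  have hθ : 0 ≤ ∫ x in (0 : ℝ)..L, θ x t ^ 2 := integral_nonneg hL fun _ _ => sq_nonneg _
  have hq : 0 ≤ τ * ∫ x in (0 : ℝ)..L, q x t ^ 2 :=
    mul_nonneg hτ (integral_nonneg hL fun _ _ => sq_nonneg _)
  unfold energy1
  linarith

lemma energy1_nonneg (hL : 0 ≤ L) (hτ : 0 ≤ τ) (hm : ∀ x ∈ Icc 0 L, 0 ≤ m x)
    (hp : ∀ x ∈ Icc 0 L, 0 ≤ p x) (t : ℝ) : 0 ≤ energy1 L τ m p u θ q t :=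
  (mul_nonneg (by norm_num) (add_nonneg (integral_mul_sq_nonneg hL hp _)
    (integral_mul_sq_nonneg hL hm _))).trans (mul_integral_pdx_sq_add_le_energy1 hL hτ t)

lemma two_mul_integral_pdt_pdx_sq_le_dissipation (hL : 0 ≤ L) (hβ : 0 ≤ β) (t : ℝ) :
    2 * ∫ x in (0 : ℝ)..L, δ x * pdt (pdx u) x t ^ 2 ≤ dissipation L β δ u q t :=
  le_add_of_nonneg_right (mul_nonneg hβ (integral_nonneg hL fun _ _ => sq_nonneg _))

lemma mul_integral_q_sq_le_dissipation (hL : 0 ≤ L) (hδ : ∀ x ∈ Icc 0 L, 0 ≤ δ x) (t : ℝ) :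
    β * ∫ x in (0 : ℝ)..L, q x t ^ 2 ≤ dissipation L β δ u q t :=
  le_add_of_nonneg_left (mul_nonneg zero_le_two (integral_mul_sq_nonneg hL hδ _))

lemma dissipation_nonneg (hL : 0 ≤ L) (hβ : 0 ≤ β) (hδ : ∀ x ∈ Icc 0 L, 0 ≤ δ x) (t : ℝ) :
    0 ≤ dissipation L β δ u q t :=
  (mul_nonneg zero_le_two (integral_mul_sq_nonneg hL hδ _)).trans
    (two_mul_integral_pdt_pdx_sq_le_dissipation hL hβ t)

lemma exists_neg_F1_le_mul_energy1 (hL : 0 ≤ L) (hτ : 0 ≤ τ) (hm : ContinuousOn m (Icc 0 L))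
    (hp : ContinuousOn p (Icc 0 L)) (hm0 : ∀ x ∈ Icc 0 L, 0 ≤ m x)
    (hδ0 : ∀ x ∈ Icc 0 L, 0 ≤ δ x) (hp0 : ∀ x ∈ Icc 0 L, 0 < p x) :
    ∃ K > 0, ∀ (u θ q : ℝ → ℝ → ℝ) (t : ℝ), JointlySmooth u → u 0 t = 0 →
      -F1 L m δ u t ≤ K * energy1 L τ m p u θ q t := by
  obtain ⟨C, hC, hpoincare⟩ := exists_weighted_poincare_inequality hL hm hp hp0
  refine ⟨1 + C, by positivity, fun u θ q t hu hu0 => ?_⟩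
  have huc := hu.continuous_space t
  have hutc := hu.pdt.continuous_space t
  have huxc := hu.pdx.continuous_space t
  have hyoung : -(∫ x in (0 : ℝ)..L, m x * pdt u x t * u x t) ≤
      1 / 2 * ((∫ x in (0 : ℝ)..L, m x * pdt u x t ^ 2) + ∫ x in (0 : ℝ)..L, m x * u x t ^ 2) := by
    rw [← intervalIntegral.integral_neg, ← intervalIntegral.integral_add,
      ← intervalIntegral.integral_const_mul]
    · refine integral_mono_of_continuousOn hL (by fun_prop) (by fun_prop) fun x hx => ?_
      linarith [mul_nonneg (hm0 x (Ioo_subset_Icc_self hx)) (sq_nonneg (pdt u x t + u x t))]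
    all_goals exact ContinuousOn.intervalIntegrable_of_Icc hL (by fun_prop)
  have hu_le : ∫ x in (0 : ℝ)..L, m x * u x t ^ 2 ≤ C * ∫ x in (0 : ℝ)..L, p x * pdx u x t ^ 2 :=
    hpoincare _ _ huc.continuousOn (fun x _ => hu.hasDerivAt_pdx x t) huxc.continuousOn hu0
  have hut_nonneg : 0 ≤ ∫ x in (0 : ℝ)..L, m x * pdt u x t ^ 2 := integral_mul_sq_nonneg hL hm0 _
  have hux_nonneg : 0 ≤ ∫ x in (0 : ℝ)..L, p x * pdx u x t ^ 2 :=
    integral_mul_sq_nonneg hL (fun x hx => (hp0 x hx).le) _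
  have hδux_nonneg : 0 ≤ ∫ x in (0 : ℝ)..L, δ x * pdx u x t ^ 2 := integral_mul_sq_nonneg hL hδ0 _
  calc -F1 L m δ u t
    _ ≤ 1 / 2 * ((∫ x in (0 : ℝ)..L, m x * pdt u x t ^ 2)
          + C * ∫ x in (0 : ℝ)..L, p x * pdx u x t ^ 2) := by
        unfold F1
        linarith
    _ ≤ (1 + C) * (1 / 2 * ((∫ x in (0 : ℝ)..L, p x * pdx u x t ^ 2)
          + ∫ x in (0 : ℝ)..L, m x * pdt u x t ^ 2)) := by
        linarith [mul_nonneg hC hut_nonneg]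
    _ ≤ (1 + C) * energy1 L τ m p u θ q t := by
        gcongr
        exact mul_integral_pdx_sq_add_le_energy1 hL hτ t

lemma exists_integral_mul_pdt_sq_le_mul_dissipation (hL : 0 ≤ L) (hβ : 0 ≤ β)
    (hm : ContinuousOn m (Icc 0 L)) (hδ : ContinuousOn δ (Icc 0 L))
    (hδ0 : ∀ x ∈ Icc 0 L, 0 < δ x) :
    ∃ C ≥ 0, ∀ (u q : ℝ → ℝ → ℝ) (t : ℝ), JointlySmooth u → pdt u 0 t = 0 →
      ∫ x in (0 : ℝ)..L, m x * pdt u x t ^ 2 ≤ C * dissipation L β δ u q t := by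
  obtain ⟨C, hC, hpoincare⟩ := exists_weighted_poincare_inequality hL hm hδ hδ0
  refine ⟨C / 2, by positivity, fun u q t hu hut0 => ?_⟩
  calc ∫ x in (0 : ℝ)..L, m x * pdt u x t ^ 2
    _ ≤ C * ∫ x in (0 : ℝ)..L, δ x * pdt (pdx u) x t ^ 2 :=
        hpoincare _ _ (hu.pdt.continuous_space t).continuousOn
          (fun x _ => hu.pdx_pdt ▸ hu.pdt.hasDerivAt_pdx x t)
          (hu.pdx.pdt.continuous_space t).continuousOn hut0
    _ = C / 2 * (2 * ∫ x in (0 : ℝ)..L, δ x * pdt (pdx u) x t ^ 2) := by ring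
    _ ≤ C / 2 * dissipation L β δ u q t := by
        gcongr
        exact two_mul_integral_pdt_pdx_sq_le_dissipation hL hβ t

namespace IsIntegratedSol

lemma energy_balance (h : IsIntegratedSol L η β κ τ m δ p u θ q) (hL : 0 ≤ L)
    (hm : ContinuousOn m (Icc 0 L)) (hδ : ContinuousOn δ (Icc 0 L))
    (hp : ContinuousOn p (Icc 0 L)) (ht : 0 < t) :
    (∫ x in (0 : ℝ)..L, p x * (pdx u x t * pdt (pdx u) x t))
      + (∫ x in (0 : ℝ)..L, m x * (pdt u x t * pdt (pdt u) x t))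
      + (∫ x in (0 : ℝ)..L, θ x t * pdt θ x t)
      + τ * (∫ x in (0 : ℝ)..L, q x t * pdt q x t) = -dissipation L β δ u q t := by
  have hux := h.smooth_u.pdx.continuous_space t
  have hut := h.smooth_u.pdt.continuous_space t
  have hutt := h.smooth_u.pdt.pdt.continuous_space t
  have huxt := h.smooth_u.pdx.pdt.continuous_space t
  have hθ := h.smooth_θ.continuous_space t
  have hθt := h.smooth_θ.pdt.continuous_space t
  have hq := h.smooth_q.continuous_space t
  have hqt := h.smooth_q.pdt.continuous_space t
  have hstress := continuousOn_stress (η := η) hδ hp h.smooth_u h.smooth_θ t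
  have hut0 : pdt u 0 t = 0 := (h.pdt hm).u_left t ht
  have hutL : pdt u L t = 0 := (h.pdt hm).u_right t ht
  -- the integrand is the space derivative of the flux `u_t * stress - κ θ q`
  have hzero : ∫ x in (0 : ℝ)..L, (p x * (pdx u x t * pdt (pdx u) x t)
      + m x * (pdt u x t * pdt (pdt u) x t) + θ x t * pdt θ x t + τ * (q x t * pdt q x t)
      + 2 * (δ x * pdt (pdx u) x t ^ 2) + β * q x t ^ 2) = 0 := by
    refine integral_eq_zero_of_hasDerivAt hL
      (f := fun x => pdt u x t * stress η δ p u θ x t - κ * (θ x t * q x t)) (by fun_prop)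
      (fun x hx => ?_) (by fun_prop) (by simp [hut0, h.θ_left t ht])
      (by simp [hutL, h.θ_right t ht])
    refine (((h.smooth_u.pdt.hasDerivAt_pdx x t).mul (h.hasDerivAt_stress hm ht hx)).sub
      (((h.smooth_θ.hasDerivAt_pdx x t).mul
        (h.smooth_q.hasDerivAt_pdx x t)).const_mul κ)).congr_deriv ?_
    rw [h.smooth_u.pdx_pdt, stress]
    linear_combination -θ x t * h.heat t ht x hx - q x t * h.cattaneo t ht x hx
  rw [intervalIntegral.integral_add, intervalIntegral.integral_add, intervalIntegral.integral_add,
    intervalIntegral.integral_add, intervalIntegral.integral_add,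
    intervalIntegral.integral_const_mul, intervalIntegral.integral_const_mul,
    intervalIntegral.integral_const_mul] at hzero
  · unfold dissipation
    linarith
  all_goals exact ContinuousOn.intervalIntegrable_of_Icc hL (by fun_prop)

protected lemma hasDerivAt_energy1 (h : IsIntegratedSol L η β κ τ m δ p u θ q) (hL : 0 ≤ L)
    (hm : ContinuousOn m (Icc 0 L)) (hδ : ContinuousOn δ (Icc 0 L))
    (hp : ContinuousOn p (Icc 0 L)) (ht : 0 < t) :
    HasDerivAt (energy1 L τ m p u θ q) (-dissipation L β δ u q t) t :=
  (hasDerivAt_energy1 (hm.intervalIntegrable_of_Icc hL) (hp.intervalIntegrable_of_Icc hL)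
    h.smooth_u h.smooth_θ h.smooth_q t).congr_deriv
      (h.energy_balance hL hm hδ hp ht)

lemma hasDerivAt_energy2 (h : IsIntegratedSol L η β κ τ m δ p u θ q) (hL : 0 ≤ L)
    (hm : ContinuousOn m (Icc 0 L)) (hδ : ContinuousOn δ (Icc 0 L))
    (hp : ContinuousOn p (Icc 0 L)) (ht : 0 < t) :
    HasDerivAt (energy2 L τ m p u θ q) (-dissipation L β δ (pdt u) (pdt q) t) t := by
  rw [energy2_eq_energy1_pdt h.smooth_u]
  exact (h.pdt hm).hasDerivAt_energy1 hL hm hδ hp ht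

lemma virial_identity (h : IsIntegratedSol L η β κ τ m δ p u θ q) (hL : 0 ≤ L)
    (hm : ContinuousOn m (Icc 0 L)) (hδ : ContinuousOn δ (Icc 0 L))
    (hp : ContinuousOn p (Icc 0 L)) (ht : 0 < t) :
    (∫ x in (0 : ℝ)..L, m x * (pdt (pdt u) x t * u x t))
      + 2 * (∫ x in (0 : ℝ)..L, δ x * (pdx u x t * pdt (pdx u) x t)) =
    η * (∫ x in (0 : ℝ)..L, θ x t * pdx u x t) - ∫ x in (0 : ℝ)..L, p x * pdx u x t ^ 2 := by
  have hu := h.smooth_u.continuous_space t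
  have hux := h.smooth_u.pdx.continuous_space t
  have hutt := h.smooth_u.pdt.pdt.continuous_space t
  have huxt := h.smooth_u.pdx.pdt.continuous_space t
  have hθ := h.smooth_θ.continuous_space t
  have hstress := continuousOn_stress (η := η) hδ hp h.smooth_u h.smooth_θ t
  -- the integrand is the space derivative of `u * stress`
  have hzero : ∫ x in (0 : ℝ)..L, (m x * (pdt (pdt u) x t * u x t)
      + 2 * (δ x * (pdx u x t * pdt (pdx u) x t)) + p x * pdx u x t ^ 2
      - η * (θ x t * pdx u x t)) = 0 := by
    refine integral_eq_zero_of_hasDerivAt hL (f := fun x => u x t * stress η δ p u θ x t)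
      (by fun_prop) (fun x hx => ?_) (by fun_prop) (by simp [h.u_left t ht])
      (by simp [h.u_right t ht])
    refine ((h.smooth_u.hasDerivAt_pdx x t).mul (h.hasDerivAt_stress hm ht hx)).congr_deriv ?_
    rw [stress]
    ring
  rw [intervalIntegral.integral_sub, intervalIntegral.integral_add, intervalIntegral.integral_add,
    intervalIntegral.integral_const_mul, intervalIntegral.integral_const_mul] at hzero
  · linarith
  all_goals exact ContinuousOn.intervalIntegrable_of_Icc hL (by fun_prop)

lemma hasDerivAt_F1 (h : IsIntegratedSol L η β κ τ m δ p u θ q) (hL : 0 ≤ L)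
    (hm : ContinuousOn m (Icc 0 L)) (hδ : ContinuousOn δ (Icc 0 L))
    (hp : ContinuousOn p (Icc 0 L)) (ht : 0 < t) :
    HasDerivAt (F1 L m δ u)
      ((∫ x in (0 : ℝ)..L, m x * pdt u x t ^ 2) - (∫ x in (0 : ℝ)..L, p x * pdx u x t ^ 2)
        + η * ∫ x in (0 : ℝ)..L, θ x t * pdx u x t) t := by
  have hu := h.smooth_u.continuous_space t
  have hut := h.smooth_u.pdt.continuous_space t
  have hutt := h.smooth_u.pdt.pdt.continuous_space t
  have hmuu := (h.smooth_u.pdt.mul h.smooth_u).hasDerivAt_integral_mul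
    (hm.intervalIntegrable_of_Icc hL) t
  have hsplit : ∫ x in (0 : ℝ)..L, m x * (pdt (pdt u) x t * u x t + pdt u x t * pdt u x t) =
      (∫ x in (0 : ℝ)..L, m x * (pdt (pdt u) x t * u x t))
        + ∫ x in (0 : ℝ)..L, m x * pdt u x t ^ 2 := by
    rw [← intervalIntegral.integral_add]
    · exact integral_congr fun x _ => by ring
    all_goals exact ContinuousOn.intervalIntegrable_of_Icc hL (by fun_prop)
  simp only [h.smooth_u.pdt.pdt_mul h.smooth_u, hsplit] at hmuu
  unfold F1
  simp only [mul_assoc]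
  refine (hmuu.add (h.smooth_u.pdx.hasDerivAt_integral_mul_sq
    (hδ.intervalIntegrable_of_Icc hL) t)).congr_deriv ?_
  linarith [h.virial_identity hL hm hδ hp ht]

lemma mul_integral_θ_sq_le (h : IsIntegratedSol L η β κ τ m δ p u θ q)
    (hL : 0 ≤ L) (hβ : 0 ≤ β) (hδ : ∀ x ∈ Icc 0 L, 0 ≤ δ x) (ht : 0 < t) :
    κ ^ 2 * β * ∫ x in (0 : ℝ)..L, θ x t ^ 2 ≤ 4 * L ^ 2 * (τ ^ 2 + β ^ 2) *
      (dissipation L β δ u q t + dissipation L β δ (pdt u) (pdt q) t) := by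
  have hθx := h.smooth_θ.pdx.continuous_space t
  have hq := h.smooth_q.continuous_space t
  have hqt := h.smooth_q.pdt.continuous_space t
  have hpoincare := poincare_inequality hL (h.smooth_θ.continuous_space t).continuousOn
    (fun x _ => h.smooth_θ.hasDerivAt_pdx x t) hθx.continuousOn (h.θ_left t ht)
  rw [sub_zero] at hpoincare
  have hcattaneo : κ ^ 2 * ∫ x in (0 : ℝ)..L, pdx θ x t ^ 2 ≤ (τ ^ 2 + β ^ 2) *
      ((∫ x in (0 : ℝ)..L, q x t ^ 2) + ∫ x in (0 : ℝ)..L, pdt q x t ^ 2) := by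
    rw [← intervalIntegral.integral_add, ← intervalIntegral.integral_const_mul,
      ← intervalIntegral.integral_const_mul]
    · refine integral_mono_of_continuousOn hL (by fun_prop) (by fun_prop) fun x hx => ?_
      have heq : κ * pdx θ x t = -(τ * pdt q x t + β * q x t) := by
        linarith [h.cattaneo t ht x hx]
      rw [← mul_pow, heq]
      linarith [sq_nonneg (τ * q x t - β * pdt q x t)]
    all_goals exact ContinuousOn.intervalIntegrable_of_Icc hL (by fun_prop)
  calc κ ^ 2 * β * ∫ x in (0 : ℝ)..L, θ x t ^ 2
    _ ≤ κ ^ 2 * β * (4 * L ^ 2 * ∫ x in (0 : ℝ)..L, pdx θ x t ^ 2) := by gcongr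
    _ = 4 * L ^ 2 * β * (κ ^ 2 * ∫ x in (0 : ℝ)..L, pdx θ x t ^ 2) := by ring
    _ ≤ 4 * L ^ 2 * β * ((τ ^ 2 + β ^ 2) *
          ((∫ x in (0 : ℝ)..L, q x t ^ 2) + ∫ x in (0 : ℝ)..L, pdt q x t ^ 2)) := by gcongr
    _ = 4 * L ^ 2 * (τ ^ 2 + β ^ 2) * (β * (∫ x in (0 : ℝ)..L, q x t ^ 2)
          + β * ∫ x in (0 : ℝ)..L, pdt q x t ^ 2) := by ring
    _ ≤ _ := by
        gcongr
        exacts [mul_integral_q_sq_le_dissipation hL hδ t, mul_integral_q_sq_le_dissipation hL hδ t]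

lemma exists_deriv_F1_add_energy1_le (hL : 0 < L) (hβ : 0 < β) (hκ : κ ≠ 0) (hτ : 0 ≤ τ)
    (hm : ContinuousOn m (Icc 0 L)) (hδ : ContinuousOn δ (Icc 0 L))
    (hp : ContinuousOn p (Icc 0 L)) (hδ0 : ∀ x ∈ Icc 0 L, 0 < δ x)
    (hp0 : ∀ x ∈ Icc 0 L, 0 < p x) :
    ∃ K > 0, ∀ u θ q : ℝ → ℝ → ℝ, IsIntegratedSol L η β κ τ m δ p u θ q → ∀ t, 0 < t →
      deriv (F1 L m δ u) t + energy1 L τ m p u θ q t ≤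
        K * (dissipation L β δ u q t + dissipation L β δ (pdt u) (pdt q) t) := by
  obtain ⟨A, hA, hkinetic⟩ :=
    exists_integral_mul_pdt_sq_le_mul_dissipation hL.le hβ.le hm hδ hδ0
  obtain ⟨B, hB, hcoupling⟩ := exists_mul_integral_mul_le hL.le η hp hp0
  set C := 4 * L ^ 2 * (τ ^ 2 + β ^ 2) / (κ ^ 2 * β)
  have hC : 0 < C := by positivity
  refine ⟨3 / 2 * A + (B + 1 / 2) * C + τ / (2 * β), by positivity, fun u θ q h t ht => ?_⟩
  set R := dissipation L β δ u q t + dissipation L β δ (pdt u) (pdt q) t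
  have hδ_nonneg : ∀ x ∈ Icc 0 L, 0 ≤ δ x := fun x hx => (hδ0 x hx).le
  have hle_R : dissipation L β δ u q t ≤ R :=
    le_add_of_nonneg_right (dissipation_nonneg hL.le hβ.le hδ_nonneg t)
  have hut_le : ∫ x in (0 : ℝ)..L, m x * pdt u x t ^ 2 ≤ A * R :=
    (hkinetic u q t h.smooth_u ((h.pdt hm).u_left t ht)).trans (by gcongr)
  have hθ_le : ∫ x in (0 : ℝ)..L, θ x t ^ 2 ≤ C * R := by
    rw [div_mul_eq_mul_div, le_div_iff₀' (by positivity)]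
    exact h.mul_integral_θ_sq_le hL.le hβ.le hδ_nonneg ht
  have hq_le : ∫ x in (0 : ℝ)..L, q x t ^ 2 ≤ R / β := by
    rw [le_div_iff₀' hβ]
    exact (mul_integral_q_sq_le_dissipation hL.le hδ_nonneg t).trans hle_R
  have hθux_le := hcoupling _ _ (h.smooth_θ.continuous_space t).continuousOn
    (h.smooth_u.pdx.continuous_space t).continuousOn
  rw [(h.hasDerivAt_F1 hL.le hm hδ hp ht).deriv]
  calc _ ≤ 3 / 2 * (∫ x in (0 : ℝ)..L, m x * pdt u x t ^ 2)
        + (B + 1 / 2) * (∫ x in (0 : ℝ)..L, θ x t ^ 2)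
        + τ / 2 * ∫ x in (0 : ℝ)..L, q x t ^ 2 := by
        unfold energy1
        linarith
    _ ≤ 3 / 2 * (A * R) + (B + 1 / 2) * (C * R) + τ / 2 * (R / β) := by gcongr
    _ = (3 / 2 * A + (B + 1 / 2) * C + τ / (2 * β)) * R := by field_simp

end IsIntegratedSol

end System

theorem lyapunov_functional_estimate_general (L η β κ τ : ℝ) (hL : 0 < L) (hβ : 0 < β)
    (hκ : κ ≠ 0) (hτ : 0 ≤ τ) (m δ p : ℝ → ℝ) (hm : ContinuousOn m (Icc 0 L))
    (hδ : AbsolutelyContinuousOnInterval δ 0 L) (hp : AbsolutelyContinuousOnInterval p 0 L)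
    (hm0 : ∀ x ∈ Icc 0 L, 0 ≤ m x) (hδ0 : ∀ x ∈ Icc 0 L, 0 < δ x)
    (hp0 : ∀ x ∈ Icc 0 L, 0 < p x) :
    ∃ ε > (0 : ℝ), ∃ c > (0 : ℝ),
      ∀ u θ q : ℝ → ℝ → ℝ,
        IsSmoothSol L η β κ τ m δ p u θ q → BCD L u θ →
          ∀ t : ℝ, 0 < t →
            0 ≤ energy1 L τ m p u θ q t + energy2 L τ m p u θ q t + ε * F1 L m δ u t ∧
            HasDerivAt
              (fun s => energy1 L τ m p u θ q s + energy2 L τ m p u θ q s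
                + ε * F1 L m δ u s)
              (deriv (fun s => energy1 L τ m p u θ q s + energy2 L τ m p u θ q s
                + ε * F1 L m δ u s) t) t ∧
            deriv (fun s => energy1 L τ m p u θ q s + energy2 L τ m p u θ q s
                + ε * F1 L m δ u s) t
              ≤ -c * energy1 L τ m p u θ q t := by
  have hδc : ContinuousOn δ (Icc 0 L) := uIcc_of_le hL.le ▸ hδ.continuousOn
  have hpc : ContinuousOn p (Icc 0 L) := uIcc_of_le hL.le ▸ hp.continuousOn
  have hδ_nonneg : ∀ x ∈ Icc 0 L, 0 ≤ δ x := fun x hx => (hδ0 x hx).le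
  have hp_nonneg : ∀ x ∈ Icc 0 L, 0 ≤ p x := fun x hx => (hp0 x hx).le
  obtain ⟨K₁, hK₁, hlower⟩ := exists_neg_F1_le_mul_energy1 hL.le hτ hm hpc hm0 hδ_nonneg hp0
  obtain ⟨K₂, -, hdecay⟩ :=
    IsIntegratedSol.exists_deriv_F1_add_energy1_le (η := η) hL hβ hκ hτ hm hδc hpc hδ0 hp0
  have hK : 0 < max K₁ K₂ := lt_max_of_lt_left hK₁
  refine ⟨(max K₁ K₂)⁻¹, inv_pos.2 hK, (max K₁ K₂)⁻¹, inv_pos.2 hK, fun u θ q hsol hbc t ht => ?_⟩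
  have h := hsol.isIntegratedSol hm hδ hp hbc
  have hE₁ : 0 ≤ energy1 L τ m p u θ q t := energy1_nonneg hL.le hτ hm0 hp_nonneg t
  have hE₂ : 0 ≤ energy2 L τ m p u θ q t := by
    rw [energy2_eq_energy1_pdt h.smooth_u]
    exact energy1_nonneg hL.le hτ hm0 hp_nonneg t
  have hR : 0 ≤ dissipation L β δ u q t + dissipation L β δ (pdt u) (pdt q) t :=
    add_nonneg (dissipation_nonneg hL.le hβ.le hδ_nonneg t)
      (dissipation_nonneg hL.le hβ.le hδ_nonneg t)
  have hF₁ := (h.hasDerivAt_F1 hL.le hm hδc hpc ht).differentiableAt.hasDerivAt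
  have hderiv := ((h.hasDerivAt_energy1 hL.le hm hδc hpc ht).add
    (h.hasDerivAt_energy2 hL.le hm hδc hpc ht)).add (hF₁.const_mul (max K₁ K₂)⁻¹)
  refine ⟨?_, hderiv.differentiableAt.hasDerivAt, hderiv.deriv.trans_le ?_⟩
  · have hF₁_le : (max K₁ K₂)⁻¹ * -F1 L m δ u t ≤ energy1 L τ m p u θ q t :=
      inv_mul_le_of_le_mul₀ hK.le hE₁ <|
        (hlower u θ q t h.smooth_u (h.u_left t ht)).trans (by gcongr; exact le_max_left _ _)
    linarith
  · have hrate_le : (max K₁ K₂)⁻¹ * (deriv (F1 L m δ u) t + energy1 L τ m p u θ q t) ≤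
        dissipation L β δ u q t + dissipation L β δ (pdt u) (pdt q) t :=
      inv_mul_le_of_le_mul₀ hK.le hR <|
        (hdecay u θ q h t ht).trans (by gcongr; exact le_max_right _ _)
    linarith

theorem lyapunov_functional_estimate
    (L η β κ τ : ℝ) (hL : 0 < L) (hη : 0 < η) (hβ : 0 < β) (hκ : 0 < κ) (hτ : 0 < τ)
    (m δ p : ℝ → ℝ)
    (hmLip : ∃ K, LipschitzOnWith K m (Icc 0 L))
    (hδLip : ∃ K, LipschitzOnWith K δ (Icc 0 L))
    (hpLip : ∃ K, LipschitzOnWith K p (Icc 0 L))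
    (hmpos : ∀ x ∈ Icc (0 : ℝ) L, 0 < m x)
    (hδpos : ∀ x ∈ Icc (0 : ℝ) L, 0 < δ x)
    (hppos : ∀ x ∈ Icc (0 : ℝ) L, 0 < p x)
    :
    ∃ ε > (0 : ℝ), ∃ c > (0 : ℝ),
      ∀ u θ q : ℝ → ℝ → ℝ,
        IsSmoothSol L η β κ τ m δ p u θ q → BCD L u θ →
          ∀ t : ℝ, 0 < t →
            0 ≤ energy1 L τ m p u θ q t + energy2 L τ m p u θ q t + ε * F1 L m δ u t ∧
            HasDerivAt
              (fun s => energy1 L τ m p u θ q s + energy2 L τ m p u θ q s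
                + ε * F1 L m δ u s)
              (deriv (fun s => energy1 L τ m p u θ q s + energy2 L τ m p u θ q s
                + ε * F1 L m δ u s) t) t ∧
            deriv (fun s => energy1 L τ m p u θ q s + energy2 L τ m p u θ q s
                + ε * F1 L m δ u s) t
              ≤ -c * energy1 L τ m p u θ q t := by
  obtain ⟨Km, hm⟩ := hmLip
  obtain ⟨Kδ, hδ⟩ := hδLip
  obtain ⟨Kp, hp⟩ := hpLip
  rw [← uIcc_of_le hL.le] at hδ hp
  exact lyapunov_functional_estimate_general L η β κ τ hL hβ hκ.ne' hτ.le m δ p hm.continuousOn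
    hδ.absolutelyContinuousOnInterval hp.absolutelyContinuousOnInterval
    (fun x hx => (hmpos x hx).le) hδpos hppos
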